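/- Strong subadditivity in conditional form: for any density operator Ω on a four-partite finite-dimensional system A'B'AB, S(A'B'|AB)_Ω ≤ S(A'|AB)_Ω + S(B'|AB)_Ω, where S(X|Y) = S(ρ^{XY}) − S(ρ^Y) is the conditional von Neumann entropy. -/

import Mathlib

open Matrix Kronecker ComplexOrder

noncomputable section

/-- ω = e^{2πi/d} -/
noncomputable def qomega (d : ℕ) : ℂ := Complex.exp (2 * Real.pi * Complex.I / d)

/-- Generalized Pauli Z: Z|k⟩ = ω^k |k⟩. -/
noncomputable def pauliZ (d : ℕ) : Matrix (Fin d) (Fin d) ℂ :=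
  Matrix.diagonal fun k : Fin d => qomega d ^ (k : ℕ)

/-- Generalized Pauli X: X|k⟩ = |k+1 mod d⟩. -/
noncomputable def pauliX (d : ℕ) [NeZero d] : Matrix (Fin d) (Fin d) ℂ :=
  Matrix.of fun i j : Fin d => if i = j + 1 then 1 else 0

/-- Fourier matrix: column j is |x̃_j⟩ = (1/√d) Σ_k ω^{jk} |k⟩. -/
noncomputable def fourierMat (d : ℕ) : Matrix (Fin d) (Fin d) ℂ :=
  Matrix.of fun k j : Fin d => qomega d ^ ((j : ℕ) * (k : ℕ)) / (Real.sqrt d : ℂ)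

/-- density operator predicate -/
def IsDensity {n : Type*} [Fintype n] (ρ : Matrix n n ℂ) : Prop :=
  ρ.PosSemidef ∧ ρ.trace = 1

/-- von Neumann entropy in base 2, via eigenvalues. -/
noncomputable def vN {n : Type*} [Fintype n] [DecidableEq n] (ρ : Matrix n n ℂ) : ℝ :=
  if h : ρ.IsHermitian then ∑ i, -(h.eigenvalues i * Real.logb 2 (h.eigenvalues i)) else 0

/-- complete dephasing in the standard basis -/
def dephase {n : Type*} [DecidableEq n] (M : Matrix n n ℂ) : Matrix n n ℂ :=
  Matrix.of fun i j => if i = j then M i j else 0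

/-- dephasing of the first (A) factor of a bipartite state, standard (Z eigen-) basis -/
def dephaseA {a b : Type*} [DecidableEq a] (M : Matrix (a × b) (a × b) ℂ) :
    Matrix (a × b) (a × b) ℂ :=
  Matrix.of fun p q => if p.1 = q.1 then M p q else 0

/-- dephasing of the first (A) factor in the Fourier (X eigen-) basis -/
noncomputable def dephaseXA (d : ℕ) {b : Type*} [Fintype b] [DecidableEq b]
    (M : Matrix (Fin d × b) (Fin d × b) ℂ) : Matrix (Fin d × b) (Fin d × b) ℂ :=
  (fourierMat d ⊗ₖ (1 : Matrix b b ℂ)) *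
    dephaseA ((fourierMat d ⊗ₖ (1 : Matrix b b ℂ))ᴴ * M * (fourierMat d ⊗ₖ (1 : Matrix b b ℂ))) *
    (fourierMat d ⊗ₖ (1 : Matrix b b ℂ))ᴴ

/-- reduced state on A of a bipartite state -/
def r2A {a b : Type*} [Fintype b] (M : Matrix (a × b) (a × b) ℂ) : Matrix a a ℂ :=
  Matrix.of fun i j => ∑ y : b, M (i, y) (j, y)

/-- reduced state on B of a bipartite state -/
def r2B {a b : Type*} [Fintype a] (M : Matrix (a × b) (a × b) ℂ) : Matrix b b ℂ :=
  Matrix.of fun i j => ∑ x : a, M (x, i) (x, j)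

/-- reduced state on AB of a tripartite state on A ⊗ B ⊗ E -/
def rAB {a b e : Type*} [Fintype e] (M : Matrix (a × b × e) (a × b × e) ℂ) :
    Matrix (a × b) (a × b) ℂ :=
  Matrix.of fun p q => ∑ x : e, M (p.1, p.2, x) (q.1, q.2, x)

/-- reduced state on AE of a tripartite state -/
def rAE {a b e : Type*} [Fintype b] (M : Matrix (a × b × e) (a × b × e) ℂ) :
    Matrix (a × e) (a × e) ℂ :=
  Matrix.of fun p q => ∑ y : b, M (p.1, y, p.2) (q.1, y, q.2)

/-- reduced state on A of a tripartite state -/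
def rA {a b e : Type*} [Fintype b] [Fintype e] (M : Matrix (a × b × e) (a × b × e) ℂ) :
    Matrix a a ℂ :=
  Matrix.of fun i j => ∑ y : b, ∑ x : e, M (i, y, x) (j, y, x)

/-- reduced state on B of a tripartite state -/
def rB {a b e : Type*} [Fintype a] [Fintype e] (M : Matrix (a × b × e) (a × b × e) ℂ) :
    Matrix b b ℂ :=
  Matrix.of fun i j => ∑ x : a, ∑ z : e, M (x, i, z) (x, j, z)

/-- reduced state on E of a tripartite state -/
def rE {a b e : Type*} [Fintype a] [Fintype b] (M : Matrix (a × b × e) (a × b × e) ℂ) :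
    Matrix e e ℂ :=
  Matrix.of fun i j => ∑ x : a, ∑ y : b, M (x, y, i) (x, y, j)

/-- matrix logarithm (base 2) of a Hermitian matrix via spectral decomposition -/
noncomputable def mlog {n : Type*} [Fintype n] [DecidableEq n] (M : Matrix n n ℂ) :
    Matrix n n ℂ :=
  if h : M.IsHermitian then
    (h.eigenvectorUnitary : Matrix n n ℂ) *
      Matrix.diagonal (fun i => (Real.logb 2 (h.eigenvalues i) : ℂ)) *
      (h.eigenvectorUnitary : Matrix n n ℂ)ᴴ
  else 0

/-- quantum relative entropy S(ρ‖σ) = Tr[ρ(log₂ρ − log₂σ)] -/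
noncomputable def relEnt {n : Type*} [Fintype n] [DecidableEq n] (ρ σ : Matrix n n ℂ) : ℝ :=
  ((ρ * (mlog ρ - mlog σ)).trace).re

/-- trace norm of a Hermitian matrix -/
noncomputable def traceNorm {n : Type*} [Fintype n] [DecidableEq n] (M : Matrix n n ℂ) : ℝ :=
  if h : M.IsHermitian then ∑ i, |h.eigenvalues i| else 0


/-- reduced state on AB of a four-partite state on A' ⊗ B' ⊗ A ⊗ B -/
def r4AB {a' b' a b : Type*} [Fintype a'] [Fintype b']
    (M : Matrix (a' × b' × a × b) (a' × b' × a × b) ℂ) : Matrix (a × b) (a × b) ℂ :=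
  Matrix.of fun p q => ∑ x : a', ∑ y : b', M (x, y, p.1, p.2) (x, y, q.1, q.2)

/-- reduced state on A'AB -/
def r4ApAB {a' b' a b : Type*} [Fintype b']
    (M : Matrix (a' × b' × a × b) (a' × b' × a × b) ℂ) :
    Matrix (a' × a × b) (a' × a × b) ℂ :=
  Matrix.of fun p q => ∑ y : b', M (p.1, y, p.2.1, p.2.2) (q.1, y, q.2.1, q.2.2)

/-- reduced state on B'AB -/
def r4BpAB {a' b' a b : Type*} [Fintype a']
    (M : Matrix (a' × b' × a × b) (a' × b' × a × b) ℂ) :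
    Matrix (b' × a × b) (b' × a × b) ℂ :=
  Matrix.of fun p q => ∑ x : a', M (x, p.1, p.2.1, p.2.2) (x, q.1, q.2.1, q.2.2)

/-!
With `E = AB`, the claim says that `D(Ω ‖ 1 ⊗ Ω_{B'E})` does not increase when `B'` is traced out,
so it is an instance of the monotonicity of the relative entropy `D` under restriction to a
subsystem.

The relative entropy of two matrices is the Kullback–Leibler divergence `∑ P log (P / Q)` of their
Nussbaum–Szkoła distributions, and this is reached as `t → ∞` along the path
`∑ P log ((Q + t P) / Q)`, whose derivative is `∑ P² / (Q + t P)`. The derivative is the maximum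
over all matrices `X` of a quadratic form in `X`, and an embedding `φ` of the observables of the
subsystem turns the form at `φ X` into the form of the restricted states at `X`. Restricting hence
takes the maximum over fewer matrices, so it decreases the derivative for every `t`.
-/

open Filter Topology

section Classical

variable {ι κ : Type*} [Fintype ι] [Fintype κ]

/-- The (unnormalised) Kullback–Leibler divergence `∑ P log (P / Q)` of two finite families. -/
def klSum (P Q : ι → ℝ) : ℝ :=
  ∑ i, P i * (Real.log (P i) - Real.log (Q i))

/-- The `χ²`-type divergence `∑ P² / (Q + t P)`, the derivative in `t` of `klPath`. -/
def chiSqSum (P Q : ι → ℝ) (t : ℝ) : ℝ :=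
  ∑ i, P i ^ 2 / (Q i + t * P i)

/-- The path `t ↦ ∑ P log ((Q + t P) / Q)`, which starts at `0` and, up to the term
`(∑ P) log t`, tends to `klSum P Q` as `t → ∞`. -/
def klPath (P Q : ι → ℝ) (t : ℝ) : ℝ :=
  ∑ i, P i * (Real.log (Q i + t * P i) - Real.log (Q i))

lemma klPath_zero (P Q : ι → ℝ) : klPath P Q 0 = 0 := by
  simp [klPath]

lemma hasDerivAt_klPath {P Q : ι → ℝ} (hP : 0 ≤ P) (hQ : 0 ≤ Q) (hPQ : ∀ i, Q i = 0 → P i = 0)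
    {t : ℝ} (ht : 0 ≤ t) : HasDerivAt (klPath P Q) (chiSqSum P Q t) t := by
  refine HasDerivAt.fun_sum fun i _ => ?_
  rcases (hQ i).eq_or_lt with hi | hi
  · simpa [hPQ i hi.symm] using hasDerivAt_const t (0 : ℝ)
  · have hpos : Q i + t * P i ≠ 0 := (add_pos_of_pos_of_nonneg hi (mul_nonneg ht (hP i))).ne'
    have hlin : HasDerivAt (fun t => Q i + t * P i) (P i) t := by
      simpa using ((hasDerivAt_id t).mul_const (P i)).const_add (Q i)
    simpa [sq, mul_div_assoc] using
      ((hlin.log hpos).sub_const (Real.log (Q i))).const_mul (P i)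

lemma tendsto_klPath_sub_log {P : ι → ℝ} (hP : 0 ≤ P) (Q : ι → ℝ) :
    Tendsto (fun t => klPath P Q t - (∑ i, P i) * Real.log t) atTop (𝓝 (klSum P Q)) := by
  have hsplit (t : ℝ) : klPath P Q t - (∑ i, P i) * Real.log t =
      ∑ i, P i * (Real.log (Q i + t * P i) - Real.log t - Real.log (Q i)) := by
    rw [klPath, Finset.sum_mul, ← Finset.sum_sub_distrib]
    exact Finset.sum_congr rfl fun i _ => by ring
  simp only [hsplit]
  refine tendsto_finsetSum _ fun i _ => ?_
  rcases (hP i).eq_or_lt with hi | hi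
  · simp [← hi]
  have hlim : Tendsto (fun t => Q i / t + P i) atTop (𝓝 (P i)) := by
    simpa using (tendsto_const_nhds.div_atTop tendsto_id).add_const (P i)
  refine (((hlim.log hi.ne').congr' ?_).sub_const _).const_mul _
  filter_upwards [eventually_gt_atTop 0, hlim.eventually_ne hi.ne'] with t ht hne
  have hfactor : Q i + t * P i = t * (Q i / t + P i) := by field_simp
  rw [hfactor, Real.log_mul ht.ne' hne, add_sub_cancel_left]

lemma klSum_le_klSum_of_chiSqSum_le {P Q : ι → ℝ} {P' Q' : κ → ℝ}
    (hP : 0 ≤ P) (hQ : 0 ≤ Q) (hPQ : ∀ i, Q i = 0 → P i = 0)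
    (hP' : 0 ≤ P') (hQ' : 0 ≤ Q') (hPQ' : ∀ i, Q' i = 0 → P' i = 0)
    (hsum : ∑ i, P' i = ∑ i, P i) (hchi : ∀ t, 0 < t → chiSqSum P' Q' t ≤ chiSqSum P Q t) :
    klSum P' Q' ≤ klSum P Q := by
  have hderiv (t : ℝ) (ht : 0 ≤ t) : HasDerivAt (fun t => klPath P Q t - klPath P' Q' t)
      (chiSqSum P Q t - chiSqSum P' Q' t) t :=
    (hasDerivAt_klPath hP hQ hPQ ht).sub (hasDerivAt_klPath hP' hQ' hPQ' ht)
  have hmono : MonotoneOn (fun t => klPath P Q t - klPath P' Q' t) (Set.Ici 0) := by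
    refine monotoneOn_of_hasDerivWithinAt_nonneg (convex_Ici 0)
      (fun t ht => (hderiv t ht).continuousAt.continuousWithinAt)
      (fun t ht => (hderiv t (interior_subset ht)).hasDerivWithinAt) fun t ht => ?_
    rw [interior_Ici] at ht
    exact sub_nonneg.mpr (hchi t ht)
  refine le_of_tendsto_of_tendsto (tendsto_klPath_sub_log hP' Q') (tendsto_klPath_sub_log hP Q) ?_
  filter_upwards [eventually_ge_atTop 0] with t ht
  have hpath : klPath P' Q' t ≤ klPath P Q t := by
    simpa [klPath_zero] using hmono Set.self_mem_Ici ht ht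
  rw [hsum]
  gcongr

end Classical
section Eigenbases

variable {n : Type*} [Fintype n] [DecidableEq n] {ρ σ : Matrix n n ℂ}

lemma mlog_eq_cfc (hρ : ρ.IsHermitian) : mlog ρ = cfc (Real.logb 2) ρ := by
  rw [mlog, dif_pos hρ, hρ.cfc_eq]
  rfl

/-- The matrix `Vᴴ X U` of `X` from the eigenbasis `U` of `ρ` to the eigenbasis `V` of `σ`; its
entry at `(j, i)` is `⟨vⱼ, X uᵢ⟩`. -/
def eigenCoeff (hρ : ρ.IsHermitian) (hσ : σ.IsHermitian) : Matrix n n ℂ ≃ₗ[ℂ] Matrix n n ℂ where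
  toFun X := star (hσ.eigenvectorUnitary : Matrix n n ℂ) * X * hρ.eigenvectorUnitary
  invFun Y := hσ.eigenvectorUnitary * Y * star (hρ.eigenvectorUnitary : Matrix n n ℂ)
  map_add' X Y := by rw [Matrix.mul_add, Matrix.add_mul]
  map_smul' r X := by simp
  left_inv X := by
    have hU := Unitary.mul_star_self_of_mem hρ.eigenvectorUnitary.2
    have hV := Unitary.mul_star_self_of_mem hσ.eigenvectorUnitary.2
    simp only [mul_assoc, hU, mul_one]
    rw [← mul_assoc, hV, one_mul]
  right_inv Y := by
    have hU := Unitary.star_mul_self_of_mem hρ.eigenvectorUnitary.2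
    have hV := Unitary.star_mul_self_of_mem hσ.eigenvectorUnitary.2
    simp only [mul_assoc, hU, mul_one]
    rw [← mul_assoc, hV, one_mul]

variable (hρ : ρ.IsHermitian) (hσ : σ.IsHermitian)

lemma eigenCoeff_apply (X : Matrix n n ℂ) : eigenCoeff hρ hσ X =
    star (hσ.eigenvectorUnitary : Matrix n n ℂ) * X * hρ.eigenvectorUnitary :=
  rfl

lemma eigenCoeff_self_one : eigenCoeff hρ hρ 1 = 1 := by
  simp [eigenCoeff_apply]

lemma eigenCoeff_mul_cfc (f : ℝ → ℝ) (X : Matrix n n ℂ) (j i : n) :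
    eigenCoeff hρ hσ (X * cfc f ρ) j i = eigenCoeff hρ hσ X j i * f (hρ.eigenvalues i) := by
  have hdiag : eigenCoeff hρ hσ (X * cfc f ρ) =
      eigenCoeff hρ hσ X * diagonal (RCLike.ofReal ∘ f ∘ hρ.eigenvalues) := by
    rw [hρ.cfc_eq, IsHermitian.cfc, Unitary.conjStarAlgAut_apply]
    simp only [eigenCoeff_apply, mul_assoc, Unitary.coe_star_mul_self, mul_one]
  rw [hdiag, mul_diagonal]
  rfl

lemma eigenCoeff_cfc_mul (f : ℝ → ℝ) (X : Matrix n n ℂ) (j i : n) :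
    eigenCoeff hρ hσ (cfc f σ * X) j i = f (hσ.eigenvalues j) * eigenCoeff hρ hσ X j i := by
  have hdiag : eigenCoeff hρ hσ (cfc f σ * X) =
      diagonal (RCLike.ofReal ∘ f ∘ hσ.eigenvalues) * eigenCoeff hρ hσ X := by
    rw [hσ.cfc_eq, IsHermitian.cfc, Unitary.conjStarAlgAut_apply]
    simp only [eigenCoeff_apply, ← mul_assoc, Unitary.coe_star_mul_self, one_mul]
  rw [hdiag, diagonal_mul]
  rfl

lemma eigenCoeff_cfc (f : ℝ → ℝ) (j i : n) :
    eigenCoeff hρ hσ (cfc f ρ) j i = eigenCoeff hρ hσ 1 j i * f (hρ.eigenvalues i) := by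
  simpa only [one_mul] using eigenCoeff_mul_cfc hρ hσ f 1 j i

lemma eigenCoeff_mul_matrix (X : Matrix n n ℂ) (j i : n) :
    eigenCoeff hρ hσ (X * ρ) j i = eigenCoeff hρ hσ X j i * hρ.eigenvalues i := by
  simpa only [id, cfc_id ℝ ρ hρ.isSelfAdjoint] using eigenCoeff_mul_cfc hρ hσ id X j i

lemma eigenCoeff_matrix_mul (X : Matrix n n ℂ) (j i : n) :
    eigenCoeff hρ hσ (σ * X) j i = hσ.eigenvalues j * eigenCoeff hρ hσ X j i := by
  simpa only [id, cfc_id ℝ σ hσ.isSelfAdjoint] using eigenCoeff_cfc_mul hρ hσ id X j i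

lemma trace_conjTranspose_mul_eq_sum_eigenCoeff (X Z : Matrix n n ℂ) :
    (Xᴴ * Z).trace =
      ∑ x : n × n, star (eigenCoeff hρ hσ X x.1 x.2) * eigenCoeff hρ hσ Z x.1 x.2 := by
  have hinv : ((eigenCoeff hρ hσ X)ᴴ * eigenCoeff hρ hσ Z).trace = (Xᴴ * Z).trace := by
    set U := (hρ.eigenvectorUnitary : Matrix n n ℂ)
    set V := (hσ.eigenvectorUnitary : Matrix n n ℂ)
    have hUU : U * Uᴴ = 1 := Unitary.mul_star_self_of_mem hρ.eigenvectorUnitary.2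
    have hVV : V * Vᴴ = 1 := Unitary.mul_star_self_of_mem hσ.eigenvectorUnitary.2
    calc ((eigenCoeff hρ hσ X)ᴴ * eigenCoeff hρ hσ Z).trace
        = (Uᴴ * (Xᴴ * (V * Vᴴ) * Z * U)).trace := by
          simp only [eigenCoeff_apply, conjTranspose_mul, star_eq_conjTranspose,
            conjTranspose_conjTranspose, mul_assoc, U, V]
      _ = (Xᴴ * Z * (U * Uᴴ)).trace := by rw [trace_mul_comm, hVV, mul_one, mul_assoc]
      _ = (Xᴴ * Z).trace := by rw [hUU, mul_one]
  rw [← hinv, Fintype.sum_prod_type_right]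
  rfl

end Eigenbases

section NussbaumSzkola

variable {n : Type*} [Fintype n] [DecidableEq n] {ρ σ : Matrix n n ℂ}

/-- The support of `ρ` is contained in that of `σ`, phrased as the inclusion `ker σ ⊆ ker ρ`. -/
def SupportLE (ρ σ : Matrix n n ℂ) : Prop :=
  ∀ Y : Matrix n n ℂ, σ * Y = 0 → ρ * Y = 0

/-- The first Nussbaum–Szkoła distribution `|⟨vⱼ, uᵢ⟩|² pᵢ` of a pair of states with eigenpairs
`(pᵢ, uᵢ)` and `(qⱼ, vⱼ)`, indexed by `(j, i)`. -/
def nsFst (hρ : ρ.IsHermitian) (hσ : σ.IsHermitian) (x : n × n) : ℝ :=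
  Complex.normSq (eigenCoeff hρ hσ 1 x.1 x.2) * hρ.eigenvalues x.2

/-- The second Nussbaum–Szkoła distribution `|⟨vⱼ, uᵢ⟩|² qⱼ`, see `nsFst`. -/
def nsSnd (hρ : ρ.IsHermitian) (hσ : σ.IsHermitian) (x : n × n) : ℝ :=
  Complex.normSq (eigenCoeff hρ hσ 1 x.1 x.2) * hσ.eigenvalues x.1

lemma nsFst_nonneg (hρ : ρ.PosSemidef) (hσ : σ.IsHermitian) : 0 ≤ nsFst hρ.1 hσ :=
  fun _ => mul_nonneg (Complex.normSq_nonneg _) (hρ.eigenvalues_nonneg _)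

lemma nsSnd_nonneg (hρ : ρ.IsHermitian) (hσ : σ.PosSemidef) : 0 ≤ nsSnd hρ hσ.1 :=
  fun _ => mul_nonneg (Complex.normSq_nonneg _) (hσ.eigenvalues_nonneg _)

variable (hρ : ρ.IsHermitian) (hσ : σ.IsHermitian)

lemma eigenCoeff_matrix (j i : n) :
    eigenCoeff hρ hσ ρ j i = eigenCoeff hρ hσ 1 j i * hρ.eigenvalues i := by
  simpa only [one_mul] using eigenCoeff_mul_matrix hρ hσ 1 j i

lemma star_eigenCoeff_mul_eigenCoeff_one (x : n × n) :
    star (eigenCoeff hρ hσ ρ x.1 x.2) * eigenCoeff hρ hσ 1 x.1 x.2 = nsFst hρ hσ x := by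
  rw [eigenCoeff_matrix, star_mul', Complex.star_def, Complex.conj_ofReal,
    mul_right_comm, ← Complex.normSq_eq_conj_mul_self, nsFst, Complex.ofReal_mul]

lemma sum_nsFst : ∑ x, nsFst hρ hσ x = ρ.trace.re := by
  have htrace := trace_conjTranspose_mul_eq_sum_eigenCoeff hρ hσ ρ 1
  simp only [hρ.eq, mul_one, star_eigenCoeff_mul_eigenCoeff_one] at htrace
  rw [htrace, ← Complex.ofReal_sum, Complex.ofReal_re]

lemma eigenCoeff_eq_zero_of_eigenvalues_eq_zero (h : SupportLE ρ σ) {j : n}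
    (hj : hσ.eigenvalues j = 0) (i : n) : eigenCoeff hρ hσ ρ j i = 0 := by
  set X := (eigenCoeff hρ hσ).symm (single j i 1)
  have hcoeff : eigenCoeff hρ hσ X = single j i 1 := LinearEquiv.apply_symm_apply _ _
  have hker : σ * X = 0 := by
    refine (eigenCoeff hρ hσ).injective ?_
    ext j' i'
    rw [eigenCoeff_matrix_mul, hcoeff, map_zero]
    rcases eq_or_ne j j' with rfl | hj'
    · rw [hj, Complex.ofReal_zero, zero_mul, Matrix.zero_apply]
    · rw [single_apply, if_neg fun h => hj' h.1, mul_zero, Matrix.zero_apply]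
  have hinner : (Xᴴ * ρ).trace = 0 := by
    rw [← conjTranspose_conjTranspose (Xᴴ * ρ), trace_conjTranspose, conjTranspose_mul,
      hρ.eq, conjTranspose_conjTranspose, h X hker, trace_zero, star_zero]
  rw [trace_conjTranspose_mul_eq_sum_eigenCoeff hρ hσ, hcoeff, Fintype.sum_eq_single (j, i)]
    at hinner
  · simpa using hinner
  · intro x hx
    rw [single_apply, if_neg fun h => hx (Prod.ext h.1.symm h.2.symm), star_zero, zero_mul]

lemma nsFst_eq_zero_of_nsSnd_eq_zero (h : SupportLE ρ σ) (x : n × n) (hx : nsSnd hρ hσ x = 0) :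
    nsFst hρ hσ x = 0 := by
  rcases mul_eq_zero.mp hx with hc | hq
  · rw [nsFst, hc, zero_mul]
  · have hcp := eigenCoeff_eq_zero_of_eigenvalues_eq_zero hρ hσ h hq x.2
    rw [eigenCoeff_matrix] at hcp
    simpa [nsFst] using hcp

lemma relEnt_mul_log_two_eq_klSum (h : SupportLE ρ σ) :
    relEnt ρ σ * Real.log 2 = klSum (nsFst hρ hσ) (nsSnd hρ hσ) := by
  have htrace := trace_conjTranspose_mul_eq_sum_eigenCoeff hρ hσ ρ (mlog ρ - mlog σ)
  rw [hρ.eq] at htrace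
  rw [relEnt, htrace, Complex.re_sum, Finset.sum_mul, klSum]
  refine Finset.sum_congr rfl fun x _ => ?_
  have hlog : eigenCoeff hρ hσ (mlog ρ - mlog σ) x.1 x.2 = eigenCoeff hρ hσ 1 x.1 x.2 *
      ↑(Real.logb 2 (hρ.eigenvalues x.2) - Real.logb 2 (hσ.eigenvalues x.1)) := by
    rw [mlog_eq_cfc hρ, mlog_eq_cfc hσ, map_sub, Matrix.sub_apply, eigenCoeff_cfc,
      ← mul_one (cfc _ σ), eigenCoeff_cfc_mul, Complex.ofReal_sub]
    ring
  rw [hlog, ← mul_assoc, star_eigenCoeff_mul_eigenCoeff_one, ← Complex.ofReal_mul,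
    Complex.ofReal_re, Real.logb, Real.logb, ← sub_div, mul_assoc,
    div_mul_cancel₀ _ (Real.log_pos one_lt_two).ne']
  rcases eq_or_ne (nsFst hρ hσ x) 0 with hP | hP
  · rw [hP, zero_mul, zero_mul]
  have hQ := mt (nsFst_eq_zero_of_nsSnd_eq_zero hρ hσ h x) hP
  obtain ⟨hc, hq⟩ := mul_ne_zero_iff.mp hQ
  have hp : hρ.eigenvalues x.2 ≠ 0 := right_ne_zero_of_mul hP
  rw [nsFst, nsSnd, Real.log_mul hc hp, Real.log_mul hc hq]
  ring

end NussbaumSzkola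

section Variational

variable {n : Type*} [Fintype n] {ρ σ : Matrix n n ℂ}

/-- The concave quadratic form `X ↦ 2 Re Tr(Xᴴρ) - Tr(XXᴴσ) - t Tr(XᴴXρ)`, whose maximum is the
`χ²`-type divergence of the Nussbaum–Szkoła distributions of `ρ` and `σ`. -/
def chiSqForm (ρ σ : Matrix n n ℂ) (t : ℝ) (X : Matrix n n ℂ) : ℝ :=
  2 * (Xᴴ * ρ).trace.re - (X * Xᴴ * σ).trace.re - t * (Xᴴ * X * ρ).trace.re

lemma two_mul_re_sub_mul_normSq_eq {s p : ℝ} (h : s = 0 → p = 0) (c y : ℂ) :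
    2 * (star y * (c * p)).re - s * Complex.normSq y =
      Complex.normSq c * (p ^ 2 / s) - s * Complex.normSq (y - c * ↑(p / s)) := by
  rcases eq_or_ne s 0 with rfl | hs
  · simp [h rfl]
  · simp only [Complex.normSq_apply, Complex.star_def, Complex.mul_re, Complex.mul_im,
      Complex.sub_re, Complex.sub_im, Complex.conj_re, Complex.conj_im, Complex.ofReal_re,
      Complex.ofReal_im]
    field_simp
    ring

variable [DecidableEq n]

lemma chiSqForm_eq_sum (hρ : ρ.IsHermitian) (hσ : σ.IsHermitian) (t : ℝ) (X : Matrix n n ℂ) :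
    chiSqForm ρ σ t X = ∑ x : n × n,
      (2 * (star (eigenCoeff hρ hσ X x.1 x.2) *
          (eigenCoeff hρ hσ 1 x.1 x.2 * hρ.eigenvalues x.2)).re -
        (hσ.eigenvalues x.1 + t * hρ.eigenvalues x.2) *
          Complex.normSq (eigenCoeff hρ hσ X x.1 x.2)) := by
  have hcycle : (X * Xᴴ * σ).trace = (Xᴴ * (σ * X)).trace := by
    rw [mul_assoc, trace_mul_comm, mul_assoc]
  rw [chiSqForm, hcycle, mul_assoc Xᴴ X ρ]
  simp only [trace_conjTranspose_mul_eq_sum_eigenCoeff hρ hσ, Complex.re_sum, Finset.mul_sum,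
    ← Finset.sum_sub_distrib, eigenCoeff_matrix, eigenCoeff_mul_matrix, eigenCoeff_matrix_mul]
  refine Finset.sum_congr rfl fun x _ => ?_
  have hleft (q : ℝ) (y : ℂ) : (star y * (q * y)).re = q * Complex.normSq y := by
    rw [mul_left_comm, Complex.star_def, ← Complex.normSq_eq_conj_mul_self, ← Complex.ofReal_mul,
      Complex.ofReal_re]
  rw [mul_comm (eigenCoeff hρ hσ X x.1 x.2), hleft, hleft]
  ring

lemma chiSqSum_ns (hρ : ρ.IsHermitian) (hσ : σ.IsHermitian) (t : ℝ) :
    chiSqSum (nsFst hρ hσ) (nsSnd hρ hσ) t = ∑ x : n × n,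
      Complex.normSq (eigenCoeff hρ hσ 1 x.1 x.2) *
        (hρ.eigenvalues x.2 ^ 2 / (hσ.eigenvalues x.1 + t * hρ.eigenvalues x.2)) := by
  refine Finset.sum_congr rfl fun x _ => ?_
  rw [nsFst, nsSnd, mul_left_comm t, ← mul_add, mul_pow, sq (Complex.normSq _), mul_assoc]
  rcases eq_or_ne (Complex.normSq (eigenCoeff hρ hσ 1 x.1 x.2)) 0 with hc | hc
  · rw [hc, zero_mul, zero_mul, zero_div, zero_mul]
  · rw [mul_div_mul_left _ _ hc, mul_div_assoc]

lemma isGreatest_chiSqForm (hρ : ρ.PosSemidef) (hσ : σ.PosSemidef) {t : ℝ} (ht : 0 < t) :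
    IsGreatest (Set.range (chiSqForm ρ σ t)) (chiSqSum (nsFst hρ.1 hσ.1) (nsSnd hρ.1 hσ.1) t) := by
  set p := hρ.1.eigenvalues
  set q := hσ.1.eigenvalues
  have hp0 (i : n) : 0 ≤ t * p i := mul_nonneg ht.le (hρ.eigenvalues_nonneg i)
  have hq0 (j : n) : 0 ≤ q j := hσ.eigenvalues_nonneg j
  have hzero (j i : n) (h : q j + t * p i = 0) : p i = 0 :=
    (mul_eq_zero.mp ((add_eq_zero_iff_of_nonneg (hq0 j) (hp0 i)).mp h).2).resolve_left ht.ne'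
  have hform (X : Matrix n n ℂ) : chiSqForm ρ σ t X =
      chiSqSum (nsFst hρ.1 hσ.1) (nsSnd hρ.1 hσ.1) t - ∑ x : n × n, (q x.1 + t * p x.2) *
        Complex.normSq (eigenCoeff hρ.1 hσ.1 X x.1 x.2 -
          eigenCoeff hρ.1 hσ.1 1 x.1 x.2 * ↑(p x.2 / (q x.1 + t * p x.2))) := by
    rw [chiSqForm_eq_sum hρ.1 hσ.1, chiSqSum_ns, ← Finset.sum_sub_distrib]
    exact Finset.sum_congr rfl fun x _ => two_mul_re_sub_mul_normSq_eq (hzero x.1 x.2) _ _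
  constructor
  · refine ⟨(eigenCoeff hρ.1 hσ.1).symm
      (of fun j i => eigenCoeff hρ.1 hσ.1 1 j i * ↑(p i / (q j + t * p i))), ?_⟩
    simp [hform]
  · rintro _ ⟨X, rfl⟩
    rw [hform, sub_le_self_iff]
    exact Finset.sum_nonneg fun x _ =>
      mul_nonneg (add_nonneg (hq0 x.1) (hp0 x.2)) (Complex.normSq_nonneg _)

end Variational

section DataProcessing

open scoped MatrixOrder

variable {m n : Type*} [Fintype m] [Fintype n]

lemma trace_mul_nonneg {A B : Matrix n n ℂ} (hA : A.PosSemidef) (hB : B.PosSemidef) :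
    0 ≤ (A * B).trace := by
  classical
  obtain ⟨C, rfl⟩ := CStarAlgebra.nonneg_iff_eq_star_mul_self.mp hA.nonneg
  rw [star_eq_conjTranspose, mul_assoc, trace_mul_comm]
  exact (hB.mul_mul_conjTranspose_same C).trace_nonneg

lemma mul_eq_zero_iff_trace_eq_zero {A : Matrix n n ℂ} (hA : A.PosSemidef) (Y : Matrix n m ℂ) :
    A * Y = 0 ↔ (Y * Yᴴ * A).trace = 0 := by
  classical
  obtain ⟨B, rfl⟩ := CStarAlgebra.nonneg_iff_eq_star_mul_self.mp hA.nonneg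
  have hcycle : (Y * Yᴴ * (Bᴴ * B)).trace = ((B * Y)ᴴ * (B * Y)).trace := by
    rw [Matrix.mul_assoc, trace_mul_comm, conjTranspose_mul]
    simp only [Matrix.mul_assoc]
  rw [star_eq_conjTranspose, conjTranspose_mul_self_mul_eq_zero, hcycle,
    trace_conjTranspose_mul_self_eq_zero_iff]

variable [DecidableEq m] [DecidableEq n] {E : Matrix m m ℂ →⋆ₐ[ℂ] Matrix n n ℂ}
  {ρ σ : Matrix n n ℂ} {ρ' σ' : Matrix m m ℂ}

/-- `ρ'` is the density matrix of the restriction to the subsystem with observables `E X` of the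
state with density matrix `ρ`. -/
def IsRestriction (E : Matrix m m ℂ →⋆ₐ[ℂ] Matrix n n ℂ) (ρ : Matrix n n ℂ) (ρ' : Matrix m m ℂ) :
    Prop :=
  ∀ X, (E X * ρ).trace = (X * ρ').trace

namespace IsRestriction

lemma trace_eq (h : IsRestriction E ρ ρ') : ρ'.trace = ρ.trace := by
  simpa only [map_one, one_mul] using (h 1).symm

lemma posSemidef (h : IsRestriction E ρ ρ') (hρ : ρ.PosSemidef) : ρ'.PosSemidef := by
  have hherm : ρ'.IsHermitian := ext_iff_trace_mul_left.mpr fun X => by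
    calc (X * ρ'ᴴ).trace = star (Xᴴ * ρ').trace := by
          rw [← trace_conjTranspose, conjTranspose_mul, conjTranspose_conjTranspose, trace_mul_comm]
      _ = star (star (E X) * ρ).trace := by rw [← h, ← star_eq_conjTranspose, map_star]
      _ = (X * ρ').trace := by
          rw [← trace_conjTranspose, conjTranspose_mul, hρ.1.eq, star_eq_conjTranspose,
            conjTranspose_conjTranspose, trace_mul_comm, h]
  refine .of_dotProduct_mulVec_nonneg hherm fun x => ?_
  have hE : (E (vecMulVec x (star x))).PosSemidef :=
    (map_nonneg E (posSemidef_vecMulVec_self_star x).nonneg).posSemidef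
  calc 0 ≤ (E (vecMulVec x (star x)) * ρ).trace := trace_mul_nonneg hE hρ
    _ = star x ⬝ᵥ ρ' *ᵥ x := by
      rw [h, trace_mul_comm, mul_vecMulVec, trace_vecMulVec, dotProduct_comm]

lemma trace_mul_conjTranspose_mul_eq (h : IsRestriction E ρ ρ') (Y : Matrix m m ℂ) :
    (E Y * (E Y)ᴴ * ρ).trace = (Y * Yᴴ * ρ').trace := by
  rw [← h, map_mul, ← star_eq_conjTranspose, ← star_eq_conjTranspose, map_star]

lemma mul_eq_zero_iff (h : IsRestriction E ρ ρ') (hρ : ρ.PosSemidef) (Y : Matrix m m ℂ) :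
    ρ * E Y = 0 ↔ ρ' * Y = 0 := by
  rw [mul_eq_zero_iff_trace_eq_zero hρ, mul_eq_zero_iff_trace_eq_zero (h.posSemidef hρ),
    h.trace_mul_conjTranspose_mul_eq]

lemma supportLE (hEρ : IsRestriction E ρ ρ') (hEσ : IsRestriction E σ σ') (hρ : ρ.PosSemidef)
    (hσ : σ.PosSemidef) (h : SupportLE ρ σ) : SupportLE ρ' σ' := fun Y hY =>
  (hEρ.mul_eq_zero_iff hρ Y).mp (h _ ((hEσ.mul_eq_zero_iff hσ Y).mpr hY))

lemma chiSqForm_eq (hEρ : IsRestriction E ρ ρ') (hEσ : IsRestriction E σ σ') (t : ℝ)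
    (X : Matrix m m ℂ) : chiSqForm ρ σ t (E X) = chiSqForm ρ' σ' t X := by
  simp only [chiSqForm, ← star_eq_conjTranspose, ← map_star, ← map_mul, hEρ _, hEσ _]

lemma relEnt_le (hEρ : IsRestriction E ρ ρ') (hEσ : IsRestriction E σ σ') (hρ : ρ.PosSemidef)
    (hσ : σ.PosSemidef) (h : SupportLE ρ σ) : relEnt ρ' σ' ≤ relEnt ρ σ := by
  have hρ' := hEρ.posSemidef hρ
  have hσ' := hEσ.posSemidef hσ
  have h' := hEρ.supportLE hEσ hρ hσ h
  have hchi (t : ℝ) (ht : 0 < t) : chiSqSum (nsFst hρ'.1 hσ'.1) (nsSnd hρ'.1 hσ'.1) t ≤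
      chiSqSum (nsFst hρ.1 hσ.1) (nsSnd hρ.1 hσ.1) t := by
    obtain ⟨X, hX⟩ := (isGreatest_chiSqForm hρ' hσ' ht).1
    rw [← hX, ← hEρ.chiSqForm_eq hEσ]
    exact (isGreatest_chiSqForm hρ hσ ht).2 ⟨E X, rfl⟩
  refine le_of_mul_le_mul_right ?_ (Real.log_pos one_lt_two)
  rw [relEnt_mul_log_two_eq_klSum hρ'.1 hσ'.1 h', relEnt_mul_log_two_eq_klSum hρ.1 hσ.1 h]
  exact klSum_le_klSum_of_chiSqSum_le (nsFst_nonneg hρ hσ.1) (nsSnd_nonneg hρ.1 hσ)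
    (nsFst_eq_zero_of_nsSnd_eq_zero hρ.1 hσ.1 h) (nsFst_nonneg hρ' hσ'.1)
    (nsSnd_nonneg hρ'.1 hσ') (nsFst_eq_zero_of_nsSnd_eq_zero hρ'.1 hσ'.1 h')
    (by rw [sum_nsFst, sum_nsFst, hEρ.trace_eq]) hchi

end IsRestriction

end DataProcessing

section Entropy

variable {m n : Type*} [Fintype m] [DecidableEq m] [Fintype n] [DecidableEq n] {ρ : Matrix n n ℂ}

lemma vN_eq_neg_trace_mul_mlog (hρ : ρ.IsHermitian) : vN ρ = -(ρ * mlog ρ).trace.re := by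
  have htrace := trace_conjTranspose_mul_eq_sum_eigenCoeff hρ hρ ρ (mlog ρ)
  simp only [mlog_eq_cfc hρ, eigenCoeff_cfc, eigenCoeff_matrix, eigenCoeff_self_one, hρ.eq]
    at htrace
  rw [vN, dif_pos hρ, mlog_eq_cfc hρ, htrace, Fintype.sum_prod_type_right, Complex.re_sum,
    ← Finset.sum_neg_distrib]
  refine Finset.sum_congr rfl fun i _ => ?_
  rw [Finset.sum_eq_single i (fun j _ hj => by simp [one_apply_ne hj]) (by simp)]
  simp

lemma mlog_map (E : Matrix m m ℂ →⋆ₐ[ℂ] Matrix n n ℂ) {σ : Matrix m m ℂ} (hσ : σ.IsHermitian) :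
    mlog (E σ) = E (mlog σ) := by
  have hE : Continuous E := E.toLinearMap.continuous_of_finiteDimensional
  have hEσ : (E σ).IsHermitian := hσ.isSelfAdjoint.map E
  rw [mlog_eq_cfc hσ, mlog_eq_cfc hEσ]
  exact (E.map_cfc _ σ (σ.finite_real_spectrum.continuousOn _) hE hσ.isSelfAdjoint hEσ).symm

lemma IsRestriction.relEnt_map {E : Matrix m m ℂ →⋆ₐ[ℂ] Matrix n n ℂ} {ρ' : Matrix m m ℂ}
    (h : IsRestriction E ρ ρ') (hρ : ρ.IsHermitian) (hρ' : ρ'.IsHermitian) :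
    relEnt ρ (E ρ') = vN ρ' - vN ρ := by
  have hcross : (ρ * E (mlog ρ')).trace = (ρ' * mlog ρ').trace := by
    rw [trace_mul_comm, h, trace_mul_comm]
  rw [relEnt, mlog_map E hρ', mul_sub, trace_sub, hcross, Complex.sub_re,
    vN_eq_neg_trace_mul_mlog hρ, vN_eq_neg_trace_mul_mlog hρ']
  ring

end Entropy

section PartialTrace

variable {n k l : Type*} [Fintype n] [DecidableEq n] [Fintype k] [DecidableEq k] [Fintype l]

lemma trace_one_kronecker_mul (X : Matrix l l ℂ) (M : Matrix (k × l) (k × l) ℂ) :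
    (((1 : Matrix k k ℂ) ⊗ₖ X) * M).trace = (X * r2B M).trace := by
  simp only [trace, diag_apply, mul_apply, kroneckerMap_apply, one_apply, r2B, of_apply,
    Fintype.sum_prod_type_right, ite_mul, one_mul, zero_mul, Finset.sum_ite_eq, Finset.mem_univ,
    if_true, Finset.mul_sum]
  exact Finset.sum_congr rfl fun i _ => Finset.sum_comm

variable [DecidableEq l]

/-- The embedding `X ↦ 1 ⊗ X` of the observables of a tensor factor, where `f` identifies the
basis of the composite system with `k × l`. -/
def ampliation (f : n ≃ k × l) : Matrix l l ℂ →⋆ₐ[ℂ] Matrix n n ℂ where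
  toFun X := ((1 : Matrix k k ℂ) ⊗ₖ X).submatrix f f
  map_one' := by rw [one_kronecker_one, submatrix_one_equiv]
  map_mul' X Y := by rw [submatrix_mul_equiv, ← mul_kronecker_mul, one_mul]
  map_zero' := by rw [kronecker_zero, submatrix_zero]; rfl
  map_add' X Y := by rw [kronecker_add, submatrix_add]; rfl
  commutes' r := by
    simp only [Algebra.algebraMap_eq_smul_one, kronecker_smul, one_kronecker_one, submatrix_smul,
      Pi.smul_apply, submatrix_one_equiv]
  map_star' X := by
    simp only [star_eq_conjTranspose, conjTranspose_submatrix, conjTranspose_kronecker,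
      conjTranspose_one]

lemma ampliation_apply (f : n ≃ k × l) (X : Matrix l l ℂ) :
    ampliation f X = ((1 : Matrix k k ℂ) ⊗ₖ X).submatrix f f :=
  rfl

lemma isRestriction_ampliation (f : n ≃ k × l) (M : Matrix n n ℂ) :
    IsRestriction (ampliation f) M (r2B (M.submatrix f.symm f.symm)) := by
  intro X
  set N := M.submatrix f.symm f.symm with hN
  have hM : M = N.submatrix f f := by
    rw [hN, submatrix_submatrix, f.symm_comp_self, submatrix_id_id]
  rw [← trace_one_kronecker_mul, ampliation_apply, hM, submatrix_mul_equiv]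
  exact f.sum_comp ((1 ⊗ₖ X) * N).diag

lemma isRestriction_r2B (M : Matrix (k × l) (k × l) ℂ) :
    IsRestriction (ampliation (Equiv.refl _)) M (r2B M) :=
  isRestriction_ampliation (Equiv.refl _) M

open scoped MatrixOrder in
lemma supportLE_ampliation_r2B {M : Matrix (k × l) (k × l) ℂ} (hM : M.PosSemidef) :
    SupportLE M (ampliation (Equiv.refl (k × l)) (r2B M)) := by
  obtain ⟨B, rfl⟩ := CStarAlgebra.nonneg_iff_eq_star_mul_self.mp hM.nonneg
  set C : Matrix ((k × l) × k) l ℂ := of fun x y => B x.1 (x.2, y) with hC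
  have hr2B : r2B (star B * B) = Cᴴ * C := by
    ext i j
    simp only [r2B, star_eq_conjTranspose, mul_apply, conjTranspose_apply, of_apply, hC,
      Fintype.sum_prod_type_right]
  intro Y hY
  have hCY : ((1 : Matrix k k ℂ) ⊗ₖ C) * Y = 0 := by
    rwa [← conjTranspose_mul_self_mul_eq_zero, conjTranspose_kronecker, ← mul_kronecker_mul,
      conjTranspose_one, one_mul, ← hr2B]
  rw [star_eq_conjTranspose, conjTranspose_mul_self_mul_eq_zero]
  ext i j
  have hentry (x : k) := congrFun₂ hCY (x, i, x) j
  simp only [hC, mul_apply, kroneckerMap_apply, one_apply, of_apply, ite_mul, one_mul, zero_mul,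
    Fintype.sum_prod_type, Finset.sum_ite_irrel, Finset.sum_const_zero, Finset.sum_ite_eq,
    Finset.mem_univ, if_true, Matrix.zero_apply] at hentry
  rw [mul_apply, Fintype.sum_prod_type]
  exact Finset.sum_eq_zero fun x _ => hentry x

end PartialTrace

section StrongSubadditivity

lemma r2B_r2B {a b e : Type*} [Fintype a] [Fintype b] (M : Matrix (a × b × e) (a × b × e) ℂ) :
    r2B (r2B M) = rE M := by
  ext i j
  exact Finset.sum_comm

variable {a b e : Type*} [Fintype a] [DecidableEq a] [Fintype b] [DecidableEq b] [Fintype e]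
  [DecidableEq e]

/-- The regrouping `A × B × E ≃ B × (A × E)` which singles out the factor traced out by `rAE`. -/
def prodSwapLeft (a b e : Type*) : a × b × e ≃ b × a × e where
  toFun x := (x.2.1, x.1, x.2.2)
  invFun x := (x.2.1, x.1, x.2.2)

lemma isRestriction_rAE (M : Matrix (a × b × e) (a × b × e) ℂ) :
    IsRestriction (ampliation (prodSwapLeft a b e)) M (rAE M) :=
  isRestriction_ampliation (prodSwapLeft a b e) M

lemma rAE_ampliation (N : Matrix (b × e) (b × e) ℂ) :
    rAE (ampliation (Equiv.refl (a × b × e)) N) = ampliation (Equiv.refl (a × e)) (r2B N) := by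
  ext x y
  simp [rAE, r2B, ampliation_apply, Finset.mul_sum]

theorem ssa_conditional_general (M : Matrix (a × b × e) (a × b × e) ℂ) (hM : M.PosSemidef) :
    vN M - vN (rE M) ≤ (vN (rAE M) - vN (rE M)) + (vN (r2B M) - vN (rE M)) := by
  have hN : (r2B M).PosSemidef := (isRestriction_r2B M).posSemidef hM
  have hAE : (rAE M).PosSemidef := (isRestriction_rAE M).posSemidef hM
  have hrE : IsRestriction (ampliation (Equiv.refl (a × e))) (rAE M) (rE M) :=
    isRestriction_r2B (rAE M)
  have hσ : (ampliation (Equiv.refl (a × b × e)) (r2B M)).PosSemidef :=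
    (PosSemidef.one (n := a) (R := ℂ)).kronecker hN
  have hrσ : IsRestriction (ampliation (prodSwapLeft a b e))
      (ampliation (Equiv.refl (a × b × e)) (r2B M)) (ampliation (Equiv.refl (a × e)) (rE M)) := by
    rw [← r2B_r2B, ← rAE_ampliation (a := a) (r2B M)]
    exact isRestriction_rAE _
  have hmono : relEnt (rAE M) (ampliation (Equiv.refl (a × e)) (rE M)) ≤
      relEnt M (ampliation (Equiv.refl (a × b × e)) (r2B M)) :=
    (isRestriction_rAE M).relEnt_le hrσ hM hσ (supportLE_ampliation_r2B hM)
  rw [(isRestriction_r2B M).relEnt_map hM.1 hN.1,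
    hrE.relEnt_map hAE.1 (hrE.posSemidef hAE).1] at hmono
  linarith

end StrongSubadditivity

/-- strong subadditivity in conditional form,
S(A'B'|AB) ≤ S(A'|AB) + S(B'|AB). -/
theorem ssa_conditional {a' b' a b : Type*}
    [Fintype a'] [DecidableEq a'] [Fintype b'] [DecidableEq b']
    [Fintype a] [DecidableEq a] [Fintype b] [DecidableEq b]
    (Ω : Matrix (a' × b' × a × b) (a' × b' × a × b) ℂ) (hΩ : IsDensity Ω) :
    vN Ω - vN (r4AB Ω) ≤
      (vN (r4ApAB Ω) - vN (r4AB Ω)) + (vN (r4BpAB Ω) - vN (r4AB Ω)) :=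
  ssa_conditional_general Ω hΩ.1
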